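/- arXiv:1309.5898 — 5 statements merged into one kernel-verified Lean document; each statement's English description precedes it below -/
import Mathlib

section
/- Let L be a linear map from m×m complex matrices to n×n complex matrices. Then L admits a Kraus representation, i.e. there exist k ≥ 1 and matrices A_1,…,A_k ∈ ℂ^{n×m} such that L(X) = ∑_{i=1}^k A_i X A_i^* for all X ∈ ℂ^{m×m}, if and only if the Choi matrix Z(L) is positive semidefinite. -/
open Matrix
open scoped ComplexOrder

/-- The Choi matrix of a linear map `L` from `m × m` to `n × n` complex matrices:
its `((i,p),(j,q))` entry is the `(p,q)` entry of `L(E_{ij})`. -/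
def choi (m n : ℕ) (L : Matrix (Fin m) (Fin m) ℂ →ₗ[ℂ] Matrix (Fin n) (Fin n) ℂ) :
    Matrix (Fin m × Fin n) (Fin m × Fin n) ℂ :=
  Matrix.of fun ip jq => L (Matrix.single ip.1 jq.1 (1 : ℂ)) ip.2 jq.2

/-- `L` is a quantum channel: it admits a Kraus representation
`L(X) = ∑ Aᵢ X Aᵢ*` with `∑ Aᵢ* Aᵢ = I`. -/
def IsChannel (m n : ℕ) (L : Matrix (Fin m) (Fin m) ℂ →ₗ[ℂ] Matrix (Fin n) (Fin n) ℂ) : Prop :=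
  ∃ (k : ℕ) (A : Fin k → Matrix (Fin n) (Fin m) ℂ),
    (∀ X, L X = ∑ i, A i * X * (A i)ᴴ) ∧ ∑ i, (A i)ᴴ * A i = 1

/-- `L` is an extreme point of the convex set of quantum channels. -/
def IsExtremeChannel (m n : ℕ)
    (L : Matrix (Fin m) (Fin m) ℂ →ₗ[ℂ] Matrix (Fin n) (Fin n) ℂ) : Prop :=
  IsChannel m n L ∧
    ∀ L₁ L₂ : Matrix (Fin m) (Fin m) ℂ →ₗ[ℂ] Matrix (Fin n) (Fin n) ℂ,
      IsChannel m n L₁ → IsChannel m n L₂ → ∀ t : ℝ, 0 < t → t < 1 →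
      L = (t : ℂ) • L₁ + ((1 - t : ℝ) : ℂ) • L₂ → L₁ = L ∧ L₂ = L

/-!
A linear map is determined by its values on matrix units, hence by its Choi matrix, and the Choi
matrix of `X ↦ A X Aᴴ` is the rank-one matrix `vec A (vec A)ᴴ`. As every vector is `vec A` for a
unique `A`, Kraus representations of `L` are the same as decompositions of its Choi matrix into sums
of rank-one matrices `v vᴴ`; such a decomposition exists exactly for positive semidefinite matrices.
-/

section ChoiMatrix

variable {R m n : Type*} [Semiring R] [DecidableEq m]

/-- The Choi matrix of a linear map between matrix algebras with arbitrary index types, encoding it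
by its values on matrix units. On `Fin`-indexed complex matrices it is `choi`. -/
def choiMatrix (L : Matrix m m R →ₗ[R] Matrix n n R) : Matrix (m × n) (m × n) R :=
  of fun ip jq => L (single ip.1 jq.1 1) ip.2 jq.2

theorem choiMatrix_apply (L : Matrix m m R →ₗ[R] Matrix n n R) (i j : m) (p q : n) :
    choiMatrix L (i, p) (j, q) = L (single i j 1) p q :=
  rfl

theorem choiMatrix_injective [Finite m] :
    Function.Injective (choiMatrix (R := R) (m := m) (n := n)) := by
  intro L K h
  refine Matrix.ext_linearMap R fun i j => LinearMap.ext_ring ?_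
  ext p q
  exact congrFun₂ h (i, p) (j, q)

end ChoiMatrix

section KrausMap

variable {R ι m n : Type*} [CommSemiring R] [Fintype ι] [Fintype m]

/-- The linear map `X ↦ ∑ l, A l * X * (A l)ᴴ` with Kraus operators `A l`: a Kraus representation
of `L` is an equality `L = krausMap A`. -/
def krausMap [Star R] (A : ι → Matrix n m R) : Matrix m m R →ₗ[R] Matrix n n R :=
  ∑ l, mulRightLinearMap n R (A l)ᴴ ∘ₗ mulLeftLinearMap m R (A l)

theorem krausMap_apply [Star R] (A : ι → Matrix n m R) (X : Matrix m m R) :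
    krausMap A X = ∑ l, A l * X * (A l)ᴴ := by
  simp [krausMap]

theorem krausMap_cons_zero [StarAddMonoid R] {k : ℕ} (A : Fin k → Matrix n m R) :
    krausMap (Fin.cons 0 A : Fin (k + 1) → Matrix n m R) = krausMap A := by
  simp [krausMap, Fin.sum_univ_succ]

theorem exists_one_le_krausMap_iff [StarAddMonoid R] (L : Matrix m m R →ₗ[R] Matrix n n R) :
    (∃ k : ℕ, 1 ≤ k ∧ ∃ A : Fin k → Matrix n m R, L = krausMap A) ↔
      ∃ (k : ℕ) (A : Fin k → Matrix n m R), L = krausMap A := by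
  constructor
  · rintro ⟨k, -, A, hA⟩
    exact ⟨k, A, hA⟩
  · rintro ⟨k, A, hA⟩
    exact ⟨k + 1, k.succ_pos, Fin.cons 0 A, hA.trans (krausMap_cons_zero A).symm⟩

theorem mul_single_one_mul_conjTranspose_apply [DecidableEq m] [Star R] (A : Matrix n m R)
    (i j : m) (p q : n) : (A * single i j (1 : R) * Aᴴ) p q = A p i * star (A q j) := by
  simp [mul_apply, single_apply, ite_and]

theorem choiMatrix_krausMap [DecidableEq m] [Star R] (A : ι → Matrix n m R) :
    choiMatrix (krausMap A) = ∑ l, vecMulVec (A l).vec (star (A l).vec) := by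
  ext ⟨i, p⟩ ⟨j, q⟩
  simp only [choiMatrix_apply, krausMap_apply, Matrix.sum_apply,
    mul_single_one_mul_conjTranspose_apply, vecMulVec_apply, vec, Pi.star_apply]

theorem eq_krausMap_iff_choiMatrix_eq [DecidableEq m] [Star R] (L : Matrix m m R →ₗ[R] Matrix n n R)
    (A : ι → Matrix n m R) :
    L = krausMap A ↔ choiMatrix L = ∑ l, vecMulVec (A l).vec (star (A l).vec) := by
  rw [← choiMatrix_injective.eq_iff, choiMatrix_krausMap]

end KrausMap

section RCLike

variable {𝕜 m n : Type*} [RCLike 𝕜] [Fintype m] [DecidableEq m]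

theorem posSemidef_choiMatrix_iff_exists_krausMap [Finite n]
    (L : Matrix m m 𝕜 →ₗ[𝕜] Matrix n n 𝕜) :
    (choiMatrix L).PosSemidef ↔ ∃ (k : ℕ) (A : Fin k → Matrix n m 𝕜), L = krausMap A := by
  simp only [eq_krausMap_iff_choiMatrix_eq, posSemidef_iff_eq_sum_vecMulVec]
  exact exists_congr fun _ => vec_bijective.surjective.comp_left.exists

theorem stmt0_general [Finite n] (L : Matrix m m 𝕜 →ₗ[𝕜] Matrix n n 𝕜) :
    (∃ k : ℕ, 1 ≤ k ∧ ∃ A : Fin k → Matrix n m 𝕜, ∀ X, L X = ∑ i, A i * X * (A i)ᴴ) ↔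
      (choiMatrix L).PosSemidef := by
  simp only [← krausMap_apply, ← LinearMap.ext_iff]
  rw [exists_one_le_krausMap_iff, posSemidef_choiMatrix_iff_exists_krausMap]

end RCLike

/-- `L` admits a Kraus representation (with `k ≥ 1`) iff its Choi matrix is
positive semidefinite. -/
theorem stmt0 (m n : ℕ) (L : Matrix (Fin m) (Fin m) ℂ →ₗ[ℂ] Matrix (Fin n) (Fin n) ℂ) :
    (∃ k : ℕ, 1 ≤ k ∧ ∃ A : Fin k → Matrix (Fin n) (Fin m) ℂ,
      ∀ X, L X = ∑ i, A i * X * (A i)ᴴ) ↔ (choi m n L).PosSemidef :=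
  stmt0_general L
end

section
/- Suppose a linear map L from m×m to n×n complex matrices is given by L(X) = ∑_{i=1}^k A_i X A_i^* where the matrices A_1,…,A_k ∈ ℂ^{n×m} are nonzero and satisfy tr(A_j^* A_i) = 0 for all i ≠ j. Then rank Z(L) = k, and for each i the vector â_i ∈ ℂ^{mn} obtained by stacking the columns of A_i (the entry of â_i at index (j,p) is the (p,j) entry of A_i) is an eigenvector of Z(L) with eigenvalue tr(A_i^* A_i); moreover these k vectors are pairwise orthogonal. -/
open Matrix
open scoped ComplexOrder

/-!
Each Kraus term `X ↦ A X A*` has the rank-one Choi matrix `â â*`, so `Z(L) = ∑ âᵢ âᵢ*`.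
Vectorization turns `tr(A* B)` into the inner product of the vectorizations of `A` and `B`, so the
`âᵢ` are orthogonal and hence, being nonzero, independent. Orthogonality leaves only one term of
`(∑ âᵢ âᵢ*) âⱼ`, and independence gives the rank, because `∑ âᵢ âᵢ* = V V*` has the rank of the
matrix `V` with columns `âᵢ`.
-/

section OuterProducts

variable {ι l m n o R : Type*}

theorem mul_single_one_mul [Semiring R] [Fintype m] [Fintype n] [DecidableEq m] [DecidableEq n]
    (A : Matrix l m R) (B : Matrix n o R) (i : m) (j : n) :
    A * single i j (1 : R) * B = vecMulVec (A.col i) (B.row j) := by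
  rw [single_eq_single_vecMulVec_single, mul_vecMulVec, vecMulVec_mul, mulVec_single_one,
    single_one_vecMul]

theorem sum_vecMulVec [NonUnitalNonAssocSemiring R] [Fintype ι] (v : ι → m → R) (w : ι → n → R) :
    ∑ i, vecMulVec (v i) (w i) = (of v)ᵀ * of w := by
  ext a b
  simp [Matrix.sum_apply, vecMulVec_apply, mul_apply]

theorem sum_vecMulVec_mulVec_of_pairwise_dotProduct_eq_zero [CommSemiring R] [Fintype ι]
    [Fintype n] {v w : ι → n → R} (hwv : Pairwise fun i j => w i ⬝ᵥ v j = 0) (j : ι) :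
    (∑ i, vecMulVec (v i) (w i)) *ᵥ v j = (w j ⬝ᵥ v j) • v j := by
  simp only [sum_mulVec, vecMulVec_mulVec, op_smul_eq_smul]
  exact Fintype.sum_eq_single j fun i hij => by rw [hwv hij, zero_smul]

theorem linearIndependent_of_pairwise_orthogonal [CommRing R] [NoZeroDivisors R] [PartialOrder R]
    [StarRing R] [StarOrderedRing R] [Fintype n] {v : ι → n → R}
    (hv : Pairwise fun i j => star (v i) ⬝ᵥ v j = 0) (hne : ∀ i, v i ≠ 0) :
    LinearIndependent R v := by
  refine linearIndependent_iff'.mpr fun s c hc j hj => ?_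
  have hcj : c j * (star (v j) ⬝ᵥ v j) = 0 := calc
    c j * (star (v j) ⬝ᵥ v j) = ∑ i ∈ s, c i * (star (v j) ⬝ᵥ v i) := by
      symm
      refine Finset.sum_eq_single_of_mem j hj fun i _ hij => ?_
      rw [hv hij.symm, mul_zero]
    _ = star (v j) ⬝ᵥ ∑ i ∈ s, c i • v i := by
      simp only [dotProduct_sum, dotProduct_smul, smul_eq_mul]
    _ = 0 := by rw [hc, dotProduct_zero]
  exact (mul_eq_zero.mp hcj).resolve_right (dotProduct_star_self_eq_zero.not.mpr (hne j))

theorem rank_sum_vecMulVec_star_of_linearIndependent [Field R] [PartialOrder R] [StarRing R]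
    [StarOrderedRing R] [Fintype ι] [Fintype n] {v : ι → n → R} (hv : LinearIndependent R v) :
    (∑ i, vecMulVec (v i) (star (v i))).rank = Fintype.card ι := by
  have hV : ∑ i, vecMulVec (v i) (star (v i)) = (of v)ᵀ * (of v)ᵀᴴ := sum_vecMulVec v _
  rw [hV, rank_self_mul_conjTranspose, rank_transpose]
  exact hv.rank_matrix

end OuterProducts

theorem choi_eq_sum_vecMulVec_star_vec {ι : Type*} [Fintype ι] {m n : ℕ}
    {A : ι → Matrix (Fin n) (Fin m) ℂ}
    {L : Matrix (Fin m) (Fin m) ℂ →ₗ[ℂ] Matrix (Fin n) (Fin n) ℂ}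
    (hL : ∀ X, L X = ∑ i, A i * X * (A i)ᴴ) :
    choi m n L = ∑ i, vecMulVec (vec (A i)) (star (vec (A i))) := by
  ext ⟨i, p⟩ ⟨j, q⟩
  simp only [choi, of_apply, hL, mul_single_one_mul, Matrix.sum_apply]
  rfl

/-- if `L(X) = ∑ Aᵢ X Aᵢ*` with the `Aᵢ` nonzero and pairwise trace-orthogonal,
then `rank Z(L) = k`, each vectorization `âᵢ` is an eigenvector of `Z(L)` with eigenvalue
`tr(Aᵢ* Aᵢ)`, and these vectors are pairwise orthogonal. -/
theorem stmt3 (m n k : ℕ) (A : Fin k → Matrix (Fin n) (Fin m) ℂ)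
    (L : Matrix (Fin m) (Fin m) ℂ →ₗ[ℂ] Matrix (Fin n) (Fin n) ℂ)
    (hL : ∀ X, L X = ∑ i, A i * X * (A i)ᴴ)
    (hA : ∀ i, A i ≠ 0)
    (horth : ∀ i j, i ≠ j → Matrix.trace ((A j)ᴴ * A i) = 0) :
    (choi m n L).rank = k ∧
    (∀ i, (choi m n L).mulVec (fun jp : Fin m × Fin n => A i jp.2 jp.1) =
        Matrix.trace ((A i)ᴴ * A i) • (fun jp : Fin m × Fin n => A i jp.2 jp.1)) ∧
    (∀ i j, i ≠ j →
      dotProduct (star (fun jp : Fin m × Fin n => A i jp.2 jp.1))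
        (fun jp : Fin m × Fin n => A j jp.2 jp.1) = 0) := by
  have hZ := choi_eq_sum_vecMulVec_star_vec hL
  have hv : Pairwise fun i j => star (vec (A i)) ⬝ᵥ vec (A j) = 0 := fun i j hij =>
    (star_vec_dotProduct_vec _ _).trans (horth j i hij.symm)
  have hind : LinearIndependent ℂ fun i => vec (A i) :=
    linearIndependent_of_pairwise_orthogonal hv fun i => vec_eq_zero_iff.not.mpr (hA i)
  refine ⟨?_, fun i => ?_, fun i j hij => hv hij⟩
  · rw [hZ, rank_sum_vecMulVec_star_of_linearIndependent hind, Fintype.card_fin]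
  · rw [hZ, ← star_vec_dotProduct_vec]
    exact sum_vecMulVec_mulVec_of_pairwise_dotProduct_eq_zero hv i
end

section
/- Let L ∈ L_{m,n} be a quantum channel given by L(X) = ∑_{i=1}^k A_i X A_i^* with A_1,…,A_k ∈ ℂ^{n×m} and ∑_{i=1}^k A_i^* A_i = I_m. If the k² matrices A_i^* A_j (i,j ∈ {1,…,k}) are linearly independent over ℂ, then L is an extreme point of L_{m,n}. Conversely, if L is an extreme point of L_{m,n} and A_1,…,A_k are linearly independent, then the k² matrices A_i^* A_j (i,j ∈ {1,…,k}) are linearly independent. -/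
open Matrix
open scoped ComplexOrder

/-!
For `P ≥ 0` write `P = C* C`; the matrices `∑ⱼ Cₗⱼ Aⱼ` are then Kraus operators of
`Φ_P : X ↦ ∑ᵢⱼ Pᵢⱼ Aⱼ X Aᵢ*`, and `Φ_P` is a channel iff `∑ᵢⱼ Pᵢⱼ Aᵢ* Aⱼ = I`. The channel `L` is
`Φ_1`. By positivity of the Choi matrix, every channel occurring in a convex decomposition of `L`
is some `Φ_P`, so if the `Aᵢ* Aⱼ` are independent then `P = 1` is forced. Conversely, a Hermitian
relation `∑ᵢⱼ Hᵢⱼ Aᵢ* Aⱼ = 0` exhibits `L` as the midpoint of the channels `Φ_(1 ± εH)`, and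
`P ↦ Φ_P` is injective when the `Aᵢ` are independent. The space of relations is closed under
conjugate transposition, so its Hermitian elements decide whether it vanishes.
-/

section SesquilinearSum

variable {R E F ι κ : Type*} [CommSemiring R] [StarRing R] [AddCommMonoid E] [Module R E]
  [AddCommMonoid F] [Module R F] [Fintype ι]

/-- The combination `∑ᵢⱼ Gᵢⱼ S(vᵢ, vⱼ)` of the values of a sesquilinear map `S` on a family `v`, as
a linear function of the coefficient matrix `G`. It serves both for `∑ᵢⱼ Gᵢⱼ Aᵢ* Aⱼ` and for the
map `X ↦ ∑ᵢⱼ Gᵢⱼ Aⱼ X Aᵢ*`. -/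
def sesqSum (S : E →ₗ⋆[R] E →ₗ[R] F) (v : ι → E) : Matrix ι ι R →ₗ[R] F where
  toFun G := ∑ i, ∑ j, G i j • S (v i) (v j)
  map_add' G H := by simp only [Matrix.add_apply, add_smul, Finset.sum_add_distrib]
  map_smul' c G := by
    simp only [Matrix.smul_apply, smul_assoc, Finset.smul_sum, RingHom.id_apply]

theorem sesqSum_apply (S : E →ₗ⋆[R] E →ₗ[R] F) (v : ι → E) (G : Matrix ι ι R) :
    sesqSum S v G = ∑ i, ∑ j, G i j • S (v i) (v j) :=
  rfl

theorem sesqSum_one [DecidableEq ι] (S : E →ₗ⋆[R] E →ₗ[R] F) (v : ι → E) :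
    sesqSum S v 1 = ∑ i, S (v i) (v i) := by
  simp [sesqSum_apply, Matrix.one_apply]

theorem sesqSum_linearCombination_one [Fintype κ] [DecidableEq κ] (S : E →ₗ⋆[R] E →ₗ[R] F)
    (v : ι → E) (C : Matrix κ ι R) :
    sesqSum S (fun l => ∑ i, C l i • v i) 1 = sesqSum S v (Cᴴ * C) := by
  rw [sesqSum_one]
  simp only [sesqSum_apply, map_sum, LinearMap.sum_apply, map_smulₛₗ, LinearMap.smul_apply,
    RingHom.id_apply, Matrix.mul_apply, conjTranspose_apply, Finset.sum_smul,
    Finset.smul_sum, smul_smul, starRingEnd_apply]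
  rw [Finset.sum_comm_cycle]
  exact Finset.sum_congr rfl fun i _ => Finset.sum_comm.trans (by simp only [mul_comm])

end SesquilinearSum

theorem linearIndependent_iff_injective_sesqSum {R E F ι : Type*} [CommRing R] [StarRing R]
    [AddCommGroup E] [Module R E] [AddCommGroup F] [Module R F] [Fintype ι]
    (S : E →ₗ⋆[R] E →ₗ[R] F) (v : ι → E) :
    LinearIndependent R (fun p : ι × ι => S (v p.1) (v p.2)) ↔
      Function.Injective (sesqSum S v) := by
  simp only [Fintype.linearIndependent_iff, injective_iff_map_eq_zero, Fintype.sum_prod_type]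
  exact ⟨fun h G hG => Matrix.ext fun i j => h (fun p => G p.1 p.2) hG (i, j),
    fun h g hg p => congrFun (congrFun (h (of fun i j => g (i, j)) hg) p.1) p.2⟩

section MatrixSesquilinear

variable {R m n ι : Type*} [CommSemiring R] [StarRing R] [Fintype n]

/-- The sesquilinear map `(P, Q) ↦ P* Q`. Its `sesqSum` at coefficient matrix `1` is the left side
of the trace-preservation condition. -/
def conjTransposeMul : Matrix n m R →ₗ⋆[R] Matrix n m R →ₗ[R] Matrix m m R :=
  LinearMap.mk₂'ₛₗ (starRingEnd R) (RingHom.id R) (fun P Q => Pᴴ * Q)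
    (by simp [Matrix.add_mul]) (by simp [starRingEnd_apply]) (by simp [Matrix.mul_add]) (by simp)

theorem conjTransposeMul_apply (P Q : Matrix n m R) : conjTransposeMul P Q = Pᴴ * Q :=
  rfl

theorem sesqSum_conjTransposeMul_conjTranspose [Fintype ι] (A : ι → Matrix n m R)
    (G : Matrix ι ι R) :
    sesqSum conjTransposeMul A Gᴴ = (sesqSum conjTransposeMul A G)ᴴ := by
  simp only [sesqSum_apply, conjTransposeMul_apply, conjTranspose_sum, conjTranspose_smul,
    conjTranspose_mul, conjTranspose_conjTranspose, conjTranspose_apply]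
  exact Finset.sum_comm

/-- The sesquilinear map sending `(P, Q)` to the linear map `X ↦ Q X P*`. The conjugated argument
comes first, so that `sesqSum` uses the same coefficients here as for `conjTransposeMul`. -/
def sandwich : Matrix m n R →ₗ⋆[R] Matrix m n R →ₗ[R] Matrix n n R →ₗ[R] Matrix m m R :=
  LinearMap.mk₂'ₛₗ (starRingEnd R) (RingHom.id R)
    (fun P Q => mulRightLinearMap m R Pᴴ ∘ₗ mulLeftLinearMap n R Q)
    (by intros; ext1; simp [Matrix.mul_add]) (by intros; ext1; simp [starRingEnd_apply])
    (by intros; ext1; simp [Matrix.add_mul]) (by intros; ext1; simp)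

theorem sandwich_apply (P Q : Matrix m n R) (X : Matrix n n R) : sandwich P Q X = Q * X * Pᴴ :=
  rfl

end MatrixSesquilinear

theorem injective_of_map_star_of_isSelfAdjoint {E F : Type*} [AddCommGroup E] [Module ℂ E]
    [StarAddMonoid E] [StarModule ℂ E] [AddCommGroup F] [Module ℂ F] [StarAddMonoid F]
    (f : E →ₗ[ℂ] F) (hf : ∀ x, f (star x) = star (f x))
    (h : ∀ x, IsSelfAdjoint x → f x = 0 → x = 0) : Function.Injective f := by
  refine (injective_iff_map_eq_zero f).2 fun x hx => ?_
  have hre : (realPart x : E) = 0 := h _ (realPart x).2 <| by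
    simp [realPart_apply_coe, hf, hx]
  have him : (imaginaryPart x : E) = 0 := h _ (imaginaryPart x).2 <| by
    simp [imaginaryPart_apply_coe, hf, hx]
  rw [← realPart_add_I_smul_imaginaryPart x, hre, him, smul_zero, add_zero]

theorem exists_pos_neg_one_le_smul_le_one {A : Type*} [CStarAlgebra A] [PartialOrder A]
    [StarOrderedRing A] {a : A} (ha : IsSelfAdjoint a) :
    ∃ ε : ℝ, 0 < ε ∧ -1 ≤ ε • a ∧ ε • a ≤ 1 := by
  set ε : ℝ := (‖a‖ + 1)⁻¹ with hε
  have hε_pos : 0 < ε := by positivity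
  have hsa : IsSelfAdjoint (ε • a) := (IsSelfAdjoint.all ε).smul ha
  have hnorm : ‖ε • a‖ ≤ 1 := by
    rw [norm_smul, Real.norm_of_nonneg hε_pos.le, hε]
    exact inv_mul_le_one_of_le₀ (le_add_of_nonneg_right zero_le_one) (by positivity)
  have hle : algebraMap ℝ A ‖ε • a‖ ≤ 1 := by
    simpa only [map_one] using algebraMap_mono A hnorm
  exact ⟨ε, hε_pos, (neg_le_neg hle).trans hsa.neg_algebraMap_norm_le_self,
    hsa.le_algebraMap_norm_self.trans hle⟩

theorem eq_zero_of_mul_eq_zero_of_linearIndependent_row {R ι μ ν : Type*} [Semiring R] [Fintype ι]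
    {K : Matrix ι μ R} (hK : LinearIndependent R K.row) {M : Matrix ν ι R} (h : M * K = 0) :
    M = 0 :=
  funext fun i => vecMul_injective_iff.2 hK <|
    calc M i ᵥ* K = (M * K) i := rfl
      _ = 0 := by rw [h]; rfl
      _ = 0 ᵥ* K := (zero_vecMul K).symm

theorem eq_zero_of_conjTranspose_mul_mul_eq_zero {R ι μ : Type*} [CommSemiring R] [StarRing R]
    [Fintype ι] {K : Matrix ι μ R} (hK : LinearIndependent R K.row) {G : Matrix ι ι R}
    (h : Kᴴ * G * K = 0) : G = 0 := by
  have hKG : Kᴴ * G = 0 := eq_zero_of_mul_eq_zero_of_linearIndependent_row hK h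
  have hGK : Gᴴ * K = 0 := by simpa using congrArg conjTranspose hKG
  exact conjTranspose_eq_zero.1 (eq_zero_of_mul_eq_zero_of_linearIndependent_row hK hGK)

section LoewnerOrder

variable {𝕜 ι κ μ : Type*} [RCLike 𝕜] [Fintype ι] [Fintype κ]

open scoped MatrixOrder

theorem mulVec_eq_zero_of_smul_conjTranspose_mul_self_le [Fintype μ] {A : Matrix ι μ 𝕜}
    {B : Matrix κ μ 𝕜} {c : ℝ} (hc : 0 < c) (h : c • (Bᴴ * B) ≤ Aᴴ * A) {x : μ → 𝕜}
    (hx : A *ᵥ x = 0) : B *ᵥ x = 0 := by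
  have hnonpos : c • (star (B *ᵥ x) ⬝ᵥ (B *ᵥ x)) ≤ 0 := by
    have := (Matrix.le_iff.1 h).dotProduct_mulVec_nonneg x
    simpa [sub_mulVec, smul_mulVec, ← mulVec_mulVec, hx, star_mulVec,
      dotProduct_mulVec] using this
  have hnonneg : 0 ≤ star (B *ᵥ x) ⬝ᵥ (B *ᵥ x) := dotProduct_star_self_nonneg _
  have hzero := hnonpos.antisymm (smul_nonneg hc.le hnonneg)
  exact dotProduct_star_self_eq_zero.1 ((smul_eq_zero.1 hzero).resolve_left hc.ne')

/-- Douglas factorization lemma. -/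
theorem exists_eq_mul_of_smul_conjTranspose_mul_self_le [Finite μ] {A : Matrix ι μ 𝕜}
    {B : Matrix κ μ 𝕜} {c : ℝ} (hc : 0 < c) (h : c • (Bᴴ * B) ≤ Aᴴ * A) :
    ∃ C : Matrix κ ι 𝕜, B = C * A := by
  classical
  cases nonempty_fintype μ
  have hmem (l : κ) : dotProductEquiv 𝕜 μ (B l) ∈
      Submodule.span 𝕜 (Set.range fun i => dotProductEquiv 𝕜 μ (A i)) := by
    refine mem_span_of_iInf_ker_le_ker fun x hx => ?_
    have hAx : A *ᵥ x = 0 := funext fun i => (Submodule.mem_iInf _).1 hx i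
    exact congrFun (mulVec_eq_zero_of_smul_conjTranspose_mul_self_le hc h hAx) l
  choose C hC using fun l => (Submodule.mem_span_range_iff_exists_fun 𝕜).1 (hmem l)
  refine ⟨of C, funext fun l => (dotProductEquiv 𝕜 μ).injective ?_⟩
  rw [← hC l, mul_apply_eq_vecMul, vecMul_eq_sum]
  simp only [map_sum, map_smul, of_apply]

end LoewnerOrder

section Choi

variable {m n : ℕ} {ι κ : Type*}

theorem choi_add (L M : Matrix (Fin m) (Fin m) ℂ →ₗ[ℂ] Matrix (Fin n) (Fin n) ℂ) :
    choi m n (L + M) = choi m n L + choi m n M :=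
  rfl

theorem choi_smul (c : ℂ) (L : Matrix (Fin m) (Fin m) ℂ →ₗ[ℂ] Matrix (Fin n) (Fin n) ℂ) :
    choi m n (c • L) = c • choi m n L :=
  rfl

/-- The matrix whose `i`-th row is the vectorization of `A i`. It factors the Choi matrices of the
maps built from `A`. -/
def vecRows (A : ι → Matrix (Fin n) (Fin m) ℂ) : Matrix ι (Fin m × Fin n) ℂ :=
  of fun i => vec (A i)

theorem linearIndependent_row_vecRows {A : ι → Matrix (Fin n) (Fin m) ℂ}
    (hA : LinearIndependent ℂ A) : LinearIndependent ℂ (vecRows A).row :=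
  hA.map_injOn ⟨⟨vec, vec_add⟩, vec_smul⟩ vec_bijective.injective.injOn

theorem eq_linearCombination_of_vecRows_eq_mul [Fintype ι] {A : ι → Matrix (Fin n) (Fin m) ℂ}
    {B : κ → Matrix (Fin n) (Fin m) ℂ} {C : Matrix κ ι ℂ} (h : vecRows B = C * vecRows A) :
    B = fun l => ∑ i, C l i • A i := by
  refine funext fun l => vec_inj.1 ?_
  calc vec (B l) = (C * vecRows A) l := congrFun h l
    _ = ∑ i, C l i • vec (A i) := by rw [mul_apply_eq_vecMul, vecMul_eq_sum]; rfl
    _ = vec (∑ i, C l i • A i) := by simp only [vec_sum, vec_smul]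

variable [Fintype ι]

theorem choi_sesqSum_sandwich (A : ι → Matrix (Fin n) (Fin m) ℂ) (G : Matrix ι ι ℂ) :
    choi m n (sesqSum sandwich A G) = ((vecRows A)ᴴ * G * vecRows A)ᵀ := by
  have hentry (P Q : Matrix (Fin n) (Fin m) ℂ) (x y : Fin m × Fin n) :
      sandwich P Q (single x.1 y.1 1) x.2 y.2 = vec Q x * star (vec P y) := by
    rw [sandwich_apply, Matrix.mul_assoc]
    simp [Matrix.mul_apply, single_apply, ite_and]
  ext x y
  simp only [choi, sesqSum_apply, of_apply, LinearMap.sum_apply, LinearMap.smul_apply,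
    Matrix.sum_apply, Matrix.smul_apply, hentry, transpose_apply, Matrix.mul_apply,
    conjTranspose_apply, vecRows, Finset.sum_mul, smul_eq_mul]
  rw [Finset.sum_comm]
  exact Finset.sum_congr rfl fun i _ => Finset.sum_congr rfl fun j _ => by ring

theorem injective_sesqSum_sandwich {A : ι → Matrix (Fin n) (Fin m) ℂ}
    (hA : LinearIndependent ℂ A) :
    Function.Injective (sesqSum (sandwich (R := ℂ)) A) := by
  refine (injective_iff_map_eq_zero _).2 fun G hG => ?_
  refine eq_zero_of_conjTranspose_mul_mul_eq_zero (linearIndependent_row_vecRows hA) ?_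
  rw [← transpose_eq_zero, ← choi_sesqSum_sandwich, hG]
  rfl

open scoped MatrixOrder

theorem choi_sesqSum_sandwich_one_nonneg [DecidableEq ι] (A : ι → Matrix (Fin n) (Fin m) ℂ) :
    0 ≤ choi m n (sesqSum sandwich A 1) := by
  rw [choi_sesqSum_sandwich, Matrix.mul_one]
  exact (posSemidef_conjTranspose_mul_self _).transpose.nonneg

theorem exists_eq_linearCombination_of_smul_choi_le [DecidableEq ι] [Fintype κ] [DecidableEq κ]
    {A : ι → Matrix (Fin n) (Fin m) ℂ} {B : κ → Matrix (Fin n) (Fin m) ℂ} {c : ℝ} (hc : 0 < c)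
    (h : c • choi m n (sesqSum sandwich B 1) ≤ choi m n (sesqSum sandwich A 1)) :
    ∃ C : Matrix κ ι ℂ, B = fun l => ∑ i, C l i • A i := by
  have hle : c • ((vecRows B)ᴴ * vecRows B) ≤ (vecRows A)ᴴ * vecRows A := by
    simpa [choi_sesqSum_sandwich, Matrix.le_iff] using (Matrix.le_iff.1 h).transpose
  obtain ⟨C, hC⟩ := exists_eq_mul_of_smul_conjTranspose_mul_self_le hc hle
  exact ⟨C, eq_linearCombination_of_vecRows_eq_mul hC⟩

end Choi

section Channel

variable {m n : ℕ} {ι : Type*} [Fintype ι] [DecidableEq ι]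
  {L : Matrix (Fin m) (Fin m) ℂ →ₗ[ℂ] Matrix (Fin n) (Fin n) ℂ}
  {A : ι → Matrix (Fin n) (Fin m) ℂ}

open scoped Matrix.Norms.L2Operator MatrixOrder

theorem eq_sesqSum_sandwich_one_iff :
    L = sesqSum sandwich A 1 ↔ ∀ X, L X = ∑ i, A i * X * (A i)ᴴ := by
  simp [LinearMap.ext_iff, sesqSum_one, sandwich_apply]

theorem sesqSum_conjTransposeMul_one :
    sesqSum conjTransposeMul A 1 = ∑ i, (A i)ᴴ * A i :=
  sesqSum_one _ _

theorem isChannel_iff_exists_sesqSum :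
    IsChannel m n L ↔ ∃ (k : ℕ) (B : Fin k → Matrix (Fin n) (Fin m) ℂ),
      L = sesqSum sandwich B 1 ∧ sesqSum conjTransposeMul B 1 = 1 := by
  simp only [IsChannel, eq_sesqSum_sandwich_one_iff, sesqSum_conjTransposeMul_one]

theorem isChannel_sesqSum_sandwich_one (hA : sesqSum conjTransposeMul A 1 = 1) :
    IsChannel m n (sesqSum sandwich A 1) := by
  let e := (Fintype.equivFin ι).symm
  refine isChannel_iff_exists_sesqSum.2 ⟨Fintype.card ι, A ∘ e, ?_, ?_⟩
  · simp only [sesqSum_one, Function.comp_apply, e.sum_comp fun i => sandwich (A i) (A i)]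
  · rw [← hA]
    simp only [sesqSum_one, Function.comp_apply, e.sum_comp fun i => conjTransposeMul (A i) (A i)]

omit [DecidableEq ι] in
theorem isChannel_sesqSum_sandwich_of_nonneg {P : Matrix ι ι ℂ} (hP : 0 ≤ P)
    (hPA : sesqSum conjTransposeMul A P = 1) : IsChannel m n (sesqSum sandwich A P) := by
  classical
  obtain ⟨C, hC⟩ : ∃ C : Matrix ι ι ℂ, P = Cᴴ * C :=
    CStarAlgebra.nonneg_iff_eq_star_mul_self.1 hP
  rw [hC, ← sesqSum_linearCombination_one] at hPA ⊢
  exact isChannel_sesqSum_sandwich_one hPA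

theorem eq_of_eq_convex_comb {L₁ L₂ : Matrix (Fin m) (Fin m) ℂ →ₗ[ℂ] Matrix (Fin n) (Fin n) ℂ}
    (hA : sesqSum conjTransposeMul A 1 = 1)
    (hinj : Function.Injective (sesqSum conjTransposeMul A))
    (h₁ : IsChannel m n L₁) (h₂ : IsChannel m n L₂) {t : ℝ} (ht0 : 0 < t) (ht1 : t < 1)
    (h : sesqSum sandwich A 1 = (t : ℂ) • L₁ + ((1 - t : ℝ) : ℂ) • L₂) :
    L₁ = sesqSum sandwich A 1 := by
  obtain ⟨_, B, rfl, hB⟩ := isChannel_iff_exists_sesqSum.1 h₁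
  obtain ⟨_, D, rfl, -⟩ := isChannel_iff_exists_sesqSum.1 h₂
  have hle : t • choi m n (sesqSum sandwich B 1) ≤ choi m n (sesqSum sandwich A 1) := by
    rw [h, choi_add, choi_smul, choi_smul, Complex.coe_smul, Complex.coe_smul]
    exact le_add_of_nonneg_right
      (smul_nonneg (sub_nonneg.2 ht1.le) (choi_sesqSum_sandwich_one_nonneg D))
  obtain ⟨C, rfl⟩ := exists_eq_linearCombination_of_smul_choi_le ht0 hle
  rw [sesqSum_linearCombination_one] at hB ⊢
  have hCC : Cᴴ * C = 1 := hinj (hB.trans hA.symm)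
  rw [hCC]

theorem isExtremeChannel_of_injective (hA : sesqSum conjTransposeMul A 1 = 1)
    (hinj : Function.Injective (sesqSum conjTransposeMul A)) :
    IsExtremeChannel m n (sesqSum sandwich A 1) := by
  refine ⟨isChannel_sesqSum_sandwich_one hA, fun L₁ L₂ h₁ h₂ t ht0 ht1 h => ⟨?_, ?_⟩⟩
  · exact eq_of_eq_convex_comb hA hinj h₁ h₂ ht0 ht1 h
  · refine eq_of_eq_convex_comb hA hinj h₂ h₁ (sub_pos.2 ht1) (sub_lt_self 1 ht0) ?_
    rw [h, sub_sub_cancel, add_comm]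

theorem eq_zero_of_isChannel_add_of_isChannel_sub (hL : IsExtremeChannel m n L)
    {D : Matrix (Fin m) (Fin m) ℂ →ₗ[ℂ] Matrix (Fin n) (Fin n) ℂ}
    (hadd : IsChannel m n (L + D)) (hsub : IsChannel m n (L - D)) : D = 0 := by
  refine add_eq_left.1 (hL.2 (L + D) (L - D) hadd hsub (1 / 2) (by norm_num) (by norm_num) ?_).1
  push_cast
  module

theorem eq_zero_of_isHermitian_of_sesqSum_eq_zero (hA : sesqSum conjTransposeMul A 1 = 1)
    (hext : IsExtremeChannel m n (sesqSum sandwich A 1)) (hli : LinearIndependent ℂ A)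
    {H : Matrix ι ι ℂ} (hH : H.IsHermitian) (hrel : sesqSum conjTransposeMul A H = 0) :
    H = 0 := by
  obtain ⟨ε, hε, hlow, hup⟩ := exists_pos_neg_one_le_smul_le_one (a := H) hH
  have hεrel : sesqSum conjTransposeMul A (ε • H) = 0 := by
    rw [LinearMap.map_smul_of_tower, hrel, smul_zero]
  have hadd : IsChannel m n (sesqSum sandwich A 1 + sesqSum sandwich A (ε • H)) := by
    rw [← map_add]
    exact isChannel_sesqSum_sandwich_of_nonneg (neg_le_iff_add_nonneg'.1 hlow)
      (by rw [map_add, hA, hεrel, add_zero])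
  have hsub : IsChannel m n (sesqSum sandwich A 1 - sesqSum sandwich A (ε • H)) := by
    rw [← map_sub]
    exact isChannel_sesqSum_sandwich_of_nonneg (sub_nonneg.2 hup)
      (by rw [map_sub, hA, hεrel, sub_zero])
  have hzero : ε • H = 0 := injective_sesqSum_sandwich hli <| by
    rw [eq_zero_of_isChannel_add_of_isChannel_sub hext hadd hsub, map_zero]
  exact (smul_eq_zero.1 hzero).resolve_left hε.ne'

theorem injective_of_isExtremeChannel (hA : sesqSum conjTransposeMul A 1 = 1)
    (hext : IsExtremeChannel m n (sesqSum sandwich A 1)) (hli : LinearIndependent ℂ A) :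
    Function.Injective (sesqSum conjTransposeMul A) :=
  injective_of_map_star_of_isSelfAdjoint _ (sesqSum_conjTransposeMul_conjTranspose A)
    fun _ => eq_zero_of_isHermitian_of_sesqSum_eq_zero hA hext hli

end Channel

/-- Choi: if the `k²` matrices `Aᵢ* Aⱼ` are linearly independent then `L` is
extreme; conversely, if `L` is extreme and the `Aᵢ` are linearly independent then the `k²`
matrices `Aᵢ* Aⱼ` are linearly independent. -/
theorem stmt7 (m n k : ℕ) (A : Fin k → Matrix (Fin n) (Fin m) ℂ)
    (L : Matrix (Fin m) (Fin m) ℂ →ₗ[ℂ] Matrix (Fin n) (Fin n) ℂ)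
    (hL : ∀ X, L X = ∑ i, A i * X * (A i)ᴴ)
    (hsum : ∑ i, (A i)ᴴ * A i = 1) :
    (LinearIndependent ℂ (fun p : Fin k × Fin k => (A p.1)ᴴ * A p.2) →
      IsExtremeChannel m n L) ∧
    (IsExtremeChannel m n L → LinearIndependent ℂ A →
      LinearIndependent ℂ (fun p : Fin k × Fin k => (A p.1)ᴴ * A p.2)) := by
  obtain rfl := eq_sesqSum_sandwich_one_iff.2 hL
  rw [← sesqSum_conjTransposeMul_one] at hsum
  have hinj := linearIndependent_iff_injective_sesqSum conjTransposeMul A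
  exact ⟨fun hli => isExtremeChannel_of_injective hsum (hinj.1 hli),
    fun hext hli => hinj.2 (injective_of_isExtremeChannel hsum hext hli)⟩
end

section
/- Let k ≤ m and let A_1,…,A_k ∈ ℂ^{n×m} satisfy ∑_{i=1}^k A_i^* A_i = I_m. Then for every ε > 0 there exist matrices A_1',…,A_k' ∈ ℂ^{n×m} such that ∑_{i=1}^k A_i'^* A_i' = I_m, the k² matrices A_i'^* A_j' (i,j ∈ {1,…,k}) are linearly independent over ℂ, and ‖A_i' − A_i‖ < ε for every i ∈ {1,…,k}. -/
open Matrix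
open scoped ComplexOrder

attribute [local instance] Matrix.frobeniusNormedAddCommGroup

/-!
The segment from `A` to a family of matrix units in one common row is a polynomial curve of
families `D`. The products `Dᵢ* Dⱼ` are independent at its far end, hence everywhere on it except
at finitely many points, in particular at points arbitrarily close to `A`. Right multiplication by
`(∑ Dᵢ* Dᵢ)^(-1/2)` then restores the normalization: it moves `D` only slightly when `D` is close
to `A`, and it acts on the products `Dᵢ* Dⱼ` by a congruence, which preserves their independence.
-/

open Filter Topology
open scoped MatrixOrder

theorem eventually_det_sum_pow_smul_ne_zero {ι K : Type*} [Fintype ι] [DecidableEq ι] [CommRing K]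
    [IsDomain K] {d : ℕ} (M : Fin d → Matrix ι ι K) {s₀ : K}
    (h : (∑ j : Fin d, s₀ ^ (j : ℕ) • M j).det ≠ 0) :
    ∀ᶠ s : K in cofinite, (∑ j : Fin d, s ^ (j : ℕ) • M j).det ≠ 0 := by
  let P : Polynomial K := (∑ j : Fin d, (Polynomial.X : Polynomial K) ^ (j : ℕ) •
    (M j).map Polynomial.C).det
  have hP (s : K) : P.eval s = (∑ j : Fin d, s ^ (j : ℕ) • M j).det := by
    rw [← Polynomial.coe_evalRingHom, RingHom.map_det]
    congr 1
    ext a b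
    simpa [Matrix.sum_apply] using
      Finset.sum_congr rfl fun j _ => mul_comm (M j a b) (s ^ (j : ℕ))
  have hP₀ : P ≠ 0 := fun h₀ => h (by rw [← hP, h₀, Polynomial.eval_zero])
  filter_upwards [(Polynomial.finite_setOfPred_isRoot hP₀).compl_mem_cofinite] with s hs
  exact hP s ▸ hs

theorem exists_linearMap_apply_eq_pi_single {ι K V : Type*} [Finite ι] [DecidableEq ι]
    [DivisionRing K] [AddCommGroup V] [Module K V] {v : ι → V} (hv : LinearIndependent K v) :
    ∃ c : V →ₗ[K] ι → K, ∀ i, c (v i) = Pi.single i 1 := by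
  obtain ⟨g, hg⟩ := (Finsupp.linearCombination K v).exists_leftInverse_of_injective
    (LinearMap.ker_eq_bot.2 hv)
  refine ⟨(Finsupp.linearEquivFunOnFinite K K ι).toLinearMap ∘ₗ g, fun i => ?_⟩
  have hgv : g (v i) = Finsupp.single i 1 := by
    simpa using LinearMap.congr_fun hg (Finsupp.single i 1)
  simp [hgv]

theorem eventually_linearIndependent_sum_pow_smul {ι K V : Type*} [Finite ι] [Field K]
    [AddCommGroup V] [Module K V] {d : ℕ} (v : Fin d → ι → V) {s₀ : K}
    (h : LinearIndependent K (∑ j : Fin d, s₀ ^ (j : ℕ) • v j)) :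
    ∀ᶠ s : K in cofinite, LinearIndependent K (∑ j : Fin d, s ^ (j : ℕ) • v j) := by
  classical
  have := Fintype.ofFinite ι
  obtain ⟨c, hc⟩ := exists_linearMap_apply_eq_pi_single h
  let M (j : Fin d) : Matrix ι ι K := Matrix.of fun i => c (v j i)
  have hM (s : K) : (∑ j : Fin d, s ^ (j : ℕ) • M j) =
      Matrix.of (c ∘ (∑ j : Fin d, s ^ (j : ℕ) • v j)) := by
    ext i l
    simp [M, Matrix.sum_apply]
  have hM₀ : (∑ j : Fin d, s₀ ^ (j : ℕ) • M j) = 1 := by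
    ext i l
    simp only [hM, Matrix.of_apply, Function.comp_apply, hc, Matrix.one_eq_pi_single]
  filter_upwards [eventually_det_sum_pow_smul_ne_zero M (s₀ := s₀) (by simp [hM₀])] with s hs
  rw [hM] at hs
  exact .of_comp c (Matrix.linearIndependent_rows_of_det_ne_zero hs)

/-- The products `Aᵢ* Aⱼ` of a family of matrices, indexed by pairs. -/
def krausProduct {ι m n R : Type*} [Fintype n] [NonUnitalNonAssocSemiring R] [Star R]
    (A : ι → Matrix n m R) (p : ι × ι) : Matrix m m R :=
  (A p.1)ᴴ * A p.2

/-- The sum `∑ Aᵢ* Aᵢ`, equal to `1` exactly when the map `X ↦ ∑ Aᵢ X Aᵢ*` preserves the trace. -/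
def krausSum {ι m n R : Type*} [Fintype ι] [Fintype n] [NonUnitalNonAssocSemiring R] [Star R]
    (A : ι → Matrix n m R) : Matrix m m R :=
  ∑ i, (A i)ᴴ * A i

section StarRing

variable {ι m n R : Type*} [Fintype n]

theorem krausProduct_mul_right [Fintype m] [Semiring R] [StarRing R] (A : ι → Matrix n m R)
    (Q : Matrix m m R) (p : ι × ι) :
    krausProduct (fun i => A i * Q) p = Qᴴ * krausProduct A p * Q := by
  simp only [krausProduct, conjTranspose_mul, Matrix.mul_assoc]

theorem krausSum_mul_right [Fintype ι] [Fintype m] [Semiring R] [StarRing R]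
    (A : ι → Matrix n m R) (Q : Matrix m m R) :
    krausSum (fun i => A i * Q) = Qᴴ * krausSum A * Q := by
  simp only [krausSum, conjTranspose_mul, Matrix.mul_assoc, Finset.mul_sum, Finset.sum_mul]

theorem linearIndependent_krausProduct_mul_right [Fintype m] [DecidableEq m] [CommRing R]
    [StarRing R] {A : ι → Matrix n m R} (hA : LinearIndependent R (krausProduct A))
    {Q : Matrix m m R} (hQ : IsUnit Q) :
    LinearIndependent R (krausProduct fun i => A i * Q) := by
  have hinj : Function.Injective (LinearMap.mulLeftRight R (Qᴴ, Q)) := fun X Y h =>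
    hQ.star.mul_left_cancel (hQ.mul_right_cancel (by simpa [star_eq_conjTranspose] using h))
  have hcomp : krausProduct (fun i => A i * Q) =
      LinearMap.mulLeftRight R (Qᴴ, Q) ∘ krausProduct A := by
    ext1 p
    simp [krausProduct_mul_right]
  exact hcomp ▸ hA.map' _ (LinearMap.ker_eq_bot.2 hinj)

theorem krausProduct_single [DecidableEq m] [DecidableEq n] [Semiring R] [StarRing R] (r : n)
    (e : ι → m) (p : ι × ι) :
    krausProduct (fun i => single r (e i) (1 : R)) p = single (e p.1) (e p.2) 1 := by
  simp [krausProduct, conjTranspose_single]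

theorem linearIndependent_krausProduct_single [Finite m] [DecidableEq m] [DecidableEq n]
    [Semiring R] [StarRing R] (r : n) (e : ι ↪ m) :
    LinearIndependent R (krausProduct fun i => single r (e i) (1 : R)) := by
  have := Fintype.ofFinite m
  convert (stdBasis R m m).linearIndependent.comp _ (e.injective.prodMap e.injective) using 1
  ext1 p
  exact (krausProduct_single r e p).trans (stdBasis_eq_single R (e p.1) (e p.2)).symm

theorem krausProduct_add_smul [CommSemiring R] [StarRing R] (A C : ι → Matrix n m R) {s : R}
    (hs : IsSelfAdjoint s) (p : ι × ι) :
    krausProduct (A + s • C) p = krausProduct A p +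
      s • ((A p.1)ᴴ * C p.2 + (C p.1)ᴴ * A p.2) + s ^ 2 • krausProduct C p := by
  simp only [krausProduct, Pi.add_apply, Pi.smul_apply, conjTranspose_add, conjTranspose_smul,
    hs.star_eq, Matrix.add_mul, Matrix.mul_add, Matrix.smul_mul, Matrix.mul_smul, smul_add,
    smul_smul, pow_two]
  abel

theorem eventually_linearIndependent_krausProduct_add_smul [Finite ι] [Field R] [StarRing R]
    (A C : ι → Matrix n m R) {s₀ : R} (hs₀ : IsSelfAdjoint s₀)
    (h : LinearIndependent R (krausProduct (A + s₀ • C))) :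
    ∀ᶠ s : R in cofinite, IsSelfAdjoint s →
      LinearIndependent R (krausProduct (A + s • C)) := by
  have hexpand {s : R} (hs : IsSelfAdjoint s) : krausProduct (A + s • C) = ∑ j : Fin 3,
      s ^ (j : ℕ) • ![krausProduct A, fun p => (A p.1)ᴴ * C p.2 + (C p.1)ᴴ * A p.2,
        krausProduct C] j := by
    ext1 p
    simp [krausProduct_add_smul A C hs, Fin.sum_univ_three]
  rw [hexpand hs₀] at h
  filter_upwards [eventually_linearIndependent_sum_pow_smul _ h] with s hs hsa
  rwa [hexpand hsa]

end StarRing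

theorem rpow_neg_half_mul_self_mul_rpow_neg_half {A : Type*} [PartialOrder A] [Ring A] [StarRing A]
    [TopologicalSpace A] [StarOrderedRing A] [Algebra ℝ A]
    [ContinuousFunctionalCalculus ℝ A IsSelfAdjoint] [NonnegSpectrumClass ℝ A]
    [IsSemitopologicalRing A] [T2Space A] {a : A} (ha : IsStrictlyPositive a) :
    a ^ (-(1 / 2) : ℝ) * a * a ^ (-(1 / 2) : ℝ) = 1 :=
  calc a ^ (-(1 / 2) : ℝ) * a * a ^ (-(1 / 2) : ℝ)
      = a ^ (-(1 / 2) : ℝ) * a ^ (1 : ℝ) * a ^ (-(1 / 2) : ℝ) := by rw [CFC.rpow_one a ha.nonneg]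
    _ = a ^ (-(1 / 2) + 1 + -(1 / 2) : ℝ) := by
      rw [CFC.rpow_add ha.isUnit, CFC.rpow_add ha.isUnit]
    _ = 1 := by rw [show (-(1 / 2) + 1 + -(1 / 2) : ℝ) = 0 by norm_num, CFC.rpow_zero a ha.nonneg]

section RCLike

variable {ι m n 𝕜 : Type*} [Fintype n] [RCLike 𝕜]

theorem dense_setOf_linearIndependent_krausProduct [Finite ι] {B : ι → Matrix n m 𝕜}
    (hB : LinearIndependent 𝕜 (krausProduct B)) :
    Dense {A : ι → Matrix n m 𝕜 | LinearIndependent 𝕜 (krausProduct A)} := by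
  intro A
  have hlim : Tendsto (fun t : ℝ => A + (t : 𝕜) • (B - A)) (𝓝[≠] 0) (𝓝 A) := by
    have hcont : Continuous fun t : ℝ => A + (t : 𝕜) • (B - A) := by fun_prop
    simpa using (hcont.tendsto 0).mono_left nhdsWithin_le_nhds
  have hindep := eventually_linearIndependent_krausProduct_add_smul A (B - A) (.one 𝕜)
    (by simpa using hB)
  have hreal : Tendsto ((↑) : ℝ → 𝕜) (𝓝[≠] 0) cofinite :=
    RCLike.ofReal_injective.tendsto_cofinite.mono_left (nhdsNE_le_cofinite 0)
  exact mem_closure_of_tendsto hlim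
    ((hreal.eventually hindep).mono fun t ht => ht (RCLike.conj_ofReal t))

variable [Fintype ι]

theorem posSemidef_krausSum [Finite m] (A : ι → Matrix n m 𝕜) : (krausSum A).PosSemidef :=
  posSemidef_sum _ fun i _ => posSemidef_conjTranspose_mul_self (A i)

theorem continuous_krausSum : Continuous (krausSum : (ι → Matrix n m 𝕜) → Matrix m m 𝕜) := by
  unfold krausSum
  fun_prop

open scoped Matrix.Norms.L2Operator in
theorem eventually_posDef_krausSum [Finite m] {A : ι → Matrix n m 𝕜} (hA : (krausSum A).PosDef) :
    ∀ᶠ D in 𝓝 A, (krausSum D).PosDef := by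
  classical
  have := Fintype.ofFinite m
  have hunit : ∀ᶠ D in 𝓝 A, IsUnit (krausSum D) :=
    continuous_krausSum.continuousAt.eventually (Units.isOpen.mem_nhds hA.isUnit)
  exact hunit.mono fun D hD => (posSemidef_krausSum D).posDef_iff_isUnit.2 hD

variable [Fintype m] [DecidableEq m]

/-- The family `Aᵢ (∑ Aⱼ* Aⱼ)^(-1/2)`, which satisfies `∑ Aᵢ* Aᵢ = 1` as soon as `∑ Aⱼ* Aⱼ` is
invertible. -/
noncomputable def krausNormalize (A : ι → Matrix n m 𝕜) (i : ι) : Matrix n m 𝕜 :=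
  A i * krausSum A ^ (-(1 / 2) : ℝ)

theorem krausNormalize_of_krausSum_eq_one {A : ι → Matrix n m 𝕜} (hA : krausSum A = 1) :
    krausNormalize A = A := by
  ext1 i
  rw [krausNormalize, hA, CFC.one_rpow, Matrix.mul_one]

theorem krausSum_krausNormalize {A : ι → Matrix n m 𝕜} (hA : (krausSum A).PosDef) :
    krausSum (krausNormalize A) = 1 := by
  have hstar : (krausSum A ^ (-(1 / 2) : ℝ))ᴴ = krausSum A ^ (-(1 / 2) : ℝ) :=
    (IsSelfAdjoint.of_nonneg CFC.rpow_nonneg).star_eq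
  unfold krausNormalize
  rw [krausSum_mul_right, hstar, rpow_neg_half_mul_self_mul_rpow_neg_half hA.isStrictlyPositive]

theorem linearIndependent_krausProduct_krausNormalize {A : ι → Matrix n m 𝕜}
    (hA : (krausSum A).PosDef) (hindep : LinearIndependent 𝕜 (krausProduct A)) :
    LinearIndependent 𝕜 (krausProduct (krausNormalize A)) :=
  linearIndependent_krausProduct_mul_right hindep
    (hA.isUnit.cfcRpow _ hA.isStrictlyPositive.nonneg)

open scoped Matrix.Norms.L2Operator in
theorem continuousAt_krausNormalize {A : ι → Matrix n m 𝕜} (hA : (krausSum A).PosDef) :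
    ContinuousAt krausNormalize A := by
  let : NormedAlgebra ℝ (Matrix m m 𝕜) :=
    { norm_smul_le r X := by simpa using norm_smul_le (r : 𝕜) X }
  have hrpow : ContinuousAt (fun D : ι → Matrix n m 𝕜 => krausSum D ^ (-(1 / 2) : ℝ)) A :=
    (CFC.continuousOn_rpow _ _ hA.isStrictlyPositive).tendsto.comp <|
      tendsto_nhdsWithin_iff.2 ⟨continuous_krausSum.continuousAt,
        (eventually_posDef_krausSum hA).mono fun _ hD => hD.isStrictlyPositive⟩
  refine continuousAt_pi.2 fun i => ?_
  exact (continuous_fst.matrix_mul continuous_snd).continuousAt.comp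
    ((continuous_apply i).continuousAt.prodMk hrpow)

theorem stmt9_general (hcard : Fintype.card ι ≤ Fintype.card m) (A : ι → Matrix n m 𝕜)
    (hsum : ∑ i, (A i)ᴴ * A i = 1) :
    A ∈ closure {A' : ι → Matrix n m 𝕜 | ∑ i, (A' i)ᴴ * A' i = 1 ∧
      LinearIndependent 𝕜 fun p : ι × ι => (A' p.1)ᴴ * A' p.2} := by
  classical
  obtain ⟨e⟩ := Function.Embedding.nonempty_of_card_le hcard
  rcases isEmpty_or_nonempty ι with hι | ⟨⟨i₀⟩⟩
  · exact subset_closure ⟨hsum, linearIndependent_empty_type⟩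
  rcases isEmpty_or_nonempty n with hn | ⟨⟨r⟩⟩
  · have h := congrFun₂ hsum (e i₀) (e i₀)
    simp [Matrix.sum_apply, Matrix.mul_apply] at h
  have hpos : (krausSum A).PosDef := by
    rw [krausSum, hsum]
    exact .one
  have hnear : ∃ᶠ D in 𝓝 A, LinearIndependent 𝕜 (krausProduct D) :=
    mem_closure_iff_frequently.1 <|
      dense_setOf_linearIndependent_krausProduct (linearIndependent_krausProduct_single r e) A
  have hlim : Tendsto krausNormalize (𝓝 A) (𝓝 A) := by
    simpa only [ContinuousAt, krausNormalize_of_krausSum_eq_one hsum] using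
      continuousAt_krausNormalize hpos
  exact mem_closure_iff_frequently.2 <| hlim.frequently <|
    (hnear.and_eventually (eventually_posDef_krausSum hpos)).mono fun D ⟨hindep, hD⟩ =>
      ⟨krausSum_krausNormalize hD, linearIndependent_krausProduct_krausNormalize hD hindep⟩

end RCLike

/-- Kraus families with `∑ Aᵢ* Aᵢ = I` and `k ≤ m` can be approximated arbitrarily
well by ones for which the `k²` products `Aᵢ'* Aⱼ'` are linearly independent. -/
theorem stmt9 (m n k : ℕ) (hk : k ≤ m) (A : Fin k → Matrix (Fin n) (Fin m) ℂ)
    (hsum : ∑ i, (A i)ᴴ * A i = 1) :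
    ∀ ε : ℝ, 0 < ε → ∃ A' : Fin k → Matrix (Fin n) (Fin m) ℂ,
      (∑ i, (A' i)ᴴ * A' i = 1) ∧
      LinearIndependent ℂ (fun p : Fin k × Fin k => (A' p.1)ᴴ * A' p.2) ∧
      ∀ i, ‖A' i - A i‖ < ε := by
  intro ε hε
  obtain ⟨A', ⟨hsum', hindep⟩, hdist⟩ :=
    Metric.mem_closure_iff.1 (stmt9_general (by simpa using hk) A hsum) ε hε
  exact ⟨A', hsum', hindep, fun i => dist_eq_norm' (A i) (A' i) ▸
    (dist_le_pi_dist A A' i).trans_lt hdist⟩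
end

section
/- Let m,n ≥ 2 and set k₀ = ⌈m/min(m,n)⌉. Then every quantum channel L ∈ L_{m,n} with rank Z(L) ≤ k₀ is an extreme point of L_{m,n}. -/
open Matrix
open scoped ComplexOrder

/-!
Factor `Z(L) = B Bᴴ` with `r = rank Z(L)` columns. If `L` is a proper convex combination of `L₁` and
another channel, then `Z(L₁)` is dominated by a multiple of `Z(L)`, so `Z(L₁) - Z(L) = B H Bᴴ` for
some Hermitian `r × r` matrix `H`. Suppose `H` has an eigenvalue `c ≠ 0`. Both channels preserve the
trace, so the partial trace of `B (c - H) Bᴴ` is `c • 1`, of rank `m`; but `c - H` has rank at most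
`r - 1`, and a partial trace over `n` dimensions multiplies the rank by at most `n`. Hence
`m ≤ n (r - 1)`, which fails for `r ≤ ⌈m / n⌉ = ⌈m / min(m, n)⌉`. So `H = 0` and `L₁ = L`.
-/

section Field

variable {K ι κ l : Type*} [Field K]

lemma exists_eq_mul_of_ker_le_ker [Fintype ι] [Fintype κ] {B : Matrix κ ι K}
    {Y : Matrix l ι K} (h : LinearMap.ker B.mulVecLin ≤ LinearMap.ker Y.mulVecLin) :
    ∃ X : Matrix l κ K, Y = X * B := by
  classical
  let e := B.mulVecLin.quotKerEquivRange
  let q := (LinearMap.ker B.mulVecLin).liftQ Y.mulVecLin h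
  let f : LinearMap.range B.mulVecLin →ₗ[K] l → K := q ∘ₗ e.symm.toLinearMap
  have hf (x : ι → K) : f (B.mulVecLin.rangeRestrict x) = Y *ᵥ x :=
    congrArg q (e.symm_apply_apply (Submodule.Quotient.mk x))
  obtain ⟨g, hg⟩ := f.exists_extend
  refine ⟨g.toMatrix', ext_of_mulVec_single fun i => ?_⟩
  rw [← mulVec_mulVec, LinearMap.toMatrix'_mulVec, ← hf, ← hg]
  rfl

lemma rank_lt_card_of_mulVec_eq_zero [Fintype ι] {A : Matrix l ι K} {v : ι → K} (hv : v ≠ 0)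
    (h : A *ᵥ v = 0) : A.rank < Fintype.card ι := by
  have hker : LinearMap.ker A.mulVecLin ≠ ⊥ := (Submodule.ne_bot_iff _).2 ⟨v, h, hv⟩
  calc A.rank < A.rank + Module.finrank K (LinearMap.ker A.mulVecLin) :=
        Nat.lt_add_of_pos_right (Submodule.one_le_finrank_iff.2 hker)
    _ = Fintype.card ι := by
        rw [rank, LinearMap.finrank_range_add_finrank_ker, Module.finrank_fintype_fun_eq_card]

lemma rank_add_le [Finite l] [Fintype ι] (A B : Matrix l ι K) :
    (A + B).rank ≤ A.rank + B.rank := by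
  have hrange : LinearMap.range (A + B).mulVecLin ≤
      LinearMap.range A.mulVecLin ⊔ LinearMap.range B.mulVecLin := by
    rw [mulVecLin_add]
    exact LinearMap.range_add_le _ _
  exact (Submodule.finrank_mono hrange).trans (Submodule.finrank_add_le_finrank_add_finrank _ _)

lemma rank_sum_le [Finite l] [Fintype ι] (s : Finset κ) (A : κ → Matrix l ι K) :
    (∑ p ∈ s, A p).rank ≤ ∑ p ∈ s, (A p).rank :=
  Finset.le_sum_of_subadditive _ rank_zero.le rank_add_le _ _

end Field

/-- The partial trace over the second factor `κ`. A linear map is trace preserving exactly when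
the partial trace of its Choi matrix is the identity. -/
def traceRight (R ι κ : Type*) [CommSemiring R] [Fintype κ] :
    Matrix (ι × κ) (ι × κ) R →ₗ[R] Matrix ι ι R where
  toFun W := of fun i j => ∑ p, W (i, p) (j, p)
  map_add' V W := by ext; simp [Finset.sum_add_distrib]
  map_smul' c W := by ext; simp [Finset.mul_sum]

lemma traceRight_apply {R ι κ : Type*} [CommSemiring R] [Fintype κ]
    (W : Matrix (ι × κ) (ι × κ) R) (i j : ι) :
    traceRight R ι κ W i j = ∑ p, W (i, p) (j, p) := rfl

lemma rank_traceRight_le {K ι κ : Type*} [Field K] [Fintype ι] [Fintype κ]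
    (W : Matrix (ι × κ) (ι × κ) K) :
    (traceRight K ι κ W).rank ≤ Fintype.card κ * W.rank := by
  have hblocks : traceRight K ι κ W = ∑ p, W.submatrix (·, p) (·, p) := by
    ext i j
    simp [traceRight_apply, Matrix.sum_apply]
  calc (traceRight K ι κ W).rank ≤ ∑ p, (W.submatrix (·, p) (·, p)).rank :=
        hblocks ▸ rank_sum_le _ _
    _ ≤ ∑ _p : κ, W.rank := Finset.sum_le_sum fun _ _ => rank_submatrix_le W _ _
    _ = Fintype.card κ * W.rank := by simp

section RCLike

variable {𝕜 ι κ ρ : Type*} [RCLike 𝕜]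

lemma exists_mul_conjTranspose_eq_of_posSemidef [Fintype ι] {Z : Matrix ι ι 𝕜}
    (hZ : Z.PosSemidef) : ∃ B : Matrix ι (Fin Z.rank) 𝕜, B * Bᴴ = Z := by
  classical
  have hH := hZ.isHermitian
  let e : Fin Z.rank ≃ {i // hH.eigenvalues i ≠ 0} :=
    (Fintype.equivFinOfCardEq hH.rank_eq_card_non_zero_eigs.symm).symm
  let U : Matrix ι ι 𝕜 := hH.eigenvectorUnitary
  let V : Matrix ι ι 𝕜 := U * diagonal fun k => (√(hH.eigenvalues k) : 𝕜)
  have hsqrt (k : ι) : (√(hH.eigenvalues k) : 𝕜) * √(hH.eigenvalues k) = hH.eigenvalues k := by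
    rw [← RCLike.ofReal_mul, Real.mul_self_sqrt (hZ.eigenvalues_nonneg k)]
  have hV : V * Vᴴ = Z := by
    calc V * Vᴴ = U * diagonal (RCLike.ofReal ∘ hH.eigenvalues) * Uᴴ := by
          rw [conjTranspose_mul, ← Matrix.mul_assoc, Matrix.mul_assoc U]
          simp [hsqrt, Function.comp_def]
      _ = Z := hH.spectral_theorem.symm
  have hV0 (k : ι) (hk : k ∉ Set.range fun k => (e k : ι)) (i : ι) : V i k = 0 := by
    have hk0 : hH.eigenvalues k = 0 := by
      by_contra hne
      exact hk ⟨e.symm ⟨k, hne⟩, by simp⟩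
    simp [V, hk0]
  refine ⟨V.submatrix id fun k => e k, ?_⟩
  ext i j
  calc ∑ k, V i (e k) * star (V j (e k)) = ∑ k, V i k * star (V j k) :=
        Fintype.sum_of_injective _ (Subtype.val_injective.comp e.injective) _ _
          (fun k hk => by simp [hV0 k hk]) fun _ => rfl
    _ = Z i j := congr_fun₂ hV i j

open scoped MatrixOrder in
lemma exists_isHermitian_eq_mul_mul_conjTranspose_of_le [Finite ι] [Fintype ρ]
    {B : Matrix ι ρ 𝕜} {W : Matrix ι ι 𝕜} (hW : 0 ≤ W) (hWB : W ≤ B * Bᴴ) :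
    ∃ H : Matrix ρ ρ 𝕜, H.IsHermitian ∧ W = B * H * Bᴴ := by
  classical
  cases nonempty_fintype ι
  obtain ⟨G, hG⟩ := CStarAlgebra.nonneg_iff_eq_star_mul_self.1 hW
  rw [star_eq_conjTranspose] at hG
  have hker : LinearMap.ker Bᴴ.mulVecLin ≤ LinearMap.ker G.mulVecLin := by
    intro x hx
    rw [LinearMap.mem_ker, mulVecLin_apply] at hx ⊢
    have hle : 0 ≤ -(star x ⬝ᵥ W *ᵥ x) := by
      simpa [sub_mulVec, ← mulVec_mulVec, hx] using (le_iff.1 hWB).dotProduct_mulVec_nonneg x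
    have hx0 : star x ⬝ᵥ W *ᵥ x = 0 :=
      le_antisymm (neg_nonneg.1 hle) (hW.posSemidef.dotProduct_mulVec_nonneg x)
    rwa [hW.posSemidef.dotProduct_mulVec_zero_iff, hG,
      conjTranspose_mul_self_mulVec_eq_zero] at hx0
  obtain ⟨X, rfl⟩ := exists_eq_mul_of_ker_le_ker hker
  exact ⟨Xᴴ * X, isHermitian_conjTranspose_mul_self X, by simp [hG, Matrix.mul_assoc]⟩

lemma eq_zero_of_traceRight_mul_mul_conjTranspose_eq_zero [Fintype ι] [Fintype κ] [Fintype ρ]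
    [DecidableEq ι] {B : Matrix (ι × κ) ρ 𝕜} {H : Matrix ρ ρ 𝕜} (hH : H.IsHermitian)
    (hB : traceRight 𝕜 ι κ (B * Bᴴ) = 1) (hBH : traceRight 𝕜 ι κ (B * H * Bᴴ) = 0)
    (hcard : Fintype.card κ * Fintype.card ρ < Fintype.card ι + Fintype.card κ) : H = 0 := by
  classical
  by_contra hne
  obtain ⟨v, c, hc, hv, hHv⟩ := hH.exists_eigenvector_of_ne_zero hne
  let S : Matrix ρ ρ 𝕜 := (c : 𝕜) • 1 - H
  have hS : S.rank < Fintype.card ρ :=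
    rank_lt_card_of_mulVec_eq_zero hv (by simp [S, sub_mulVec, hHv, smul_mulVec])
  have htr : traceRight 𝕜 ι κ (B * S * Bᴴ) = (c : 𝕜) • 1 := by
    simp [S, Matrix.mul_sub, Matrix.sub_mul, hB, hBH]
  have hle : Fintype.card ι ≤ Fintype.card κ * S.rank :=
    calc Fintype.card ι = (traceRight 𝕜 ι κ (B * S * Bᴴ)).rank := by
          rw [htr, rank_of_det_ne_zero]; simp [hc]
      _ ≤ Fintype.card κ * (B * S * Bᴴ).rank := rank_traceRight_le _
      _ ≤ Fintype.card κ * S.rank := by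
          gcongr
          exact (rank_mul_le_left _ _).trans (rank_mul_le_right _ _)
  have hle' : Fintype.card κ * (S.rank + 1) ≤ Fintype.card κ * Fintype.card ρ :=
    Nat.mul_le_mul_left _ hS
  lia

end RCLike

section Channel

variable {m n : ℕ} {L L₁ L₂ : Matrix (Fin m) (Fin m) ℂ →ₗ[ℂ] Matrix (Fin n) (Fin n) ℂ}

lemma choi_injective : Function.Injective (choi m n) := fun _ _ h =>
  Matrix.ext_linearMap ℂ fun i j => LinearMap.ext_ring <| Matrix.ext fun p q =>
    congr_fun₂ h (i, p) (j, q)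

lemma IsChannel.trace_map (hL : IsChannel m n L) (X : Matrix (Fin m) (Fin m) ℂ) :
    (L X).trace = X.trace := by
  obtain ⟨k, A, hA, hA1⟩ := hL
  calc (L X).trace = ∑ i, ((A i)ᴴ * A i * X).trace := by
        simp only [hA, trace_sum, trace_mul_cycle (A _) X]
    _ = X.trace := by rw [← trace_sum, ← Finset.sum_mul, hA1, one_mul]

lemma IsChannel.traceRight_choi (hL : IsChannel m n L) :
    traceRight ℂ (Fin m) (Fin n) (choi m n L) = 1 := by
  ext i j
  calc traceRight ℂ (Fin m) (Fin n) (choi m n L) i j = (L (single i j 1)).trace :=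
        traceRight_apply _ _ _
    _ = (single i j (1 : ℂ)).trace := hL.trace_map _
    _ = (1 : Matrix (Fin m) (Fin m) ℂ) i j := by
        obtain rfl | hij := eq_or_ne i j <;> simp [*]

lemma IsChannel.posSemidef_choi (hL : IsChannel m n L) : (choi m n L).PosSemidef := by
  obtain ⟨k, A, hA, -⟩ := hL
  let G : Matrix (Fin m × Fin n) (Fin k) ℂ := .of fun ip l => A l ip.2 ip.1
  have hG : choi m n L = G * Gᴴ := by
    ext ⟨i, p⟩ ⟨j, q⟩
    simp [choi, G, hA, Matrix.sum_apply, Matrix.mul_apply, Matrix.single_apply, ite_and]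
  exact hG ▸ posSemidef_self_mul_conjTranspose G

lemma IsChannel.eq_of_eq_smul_add_smul (hL : IsChannel m n L) (hL₁ : IsChannel m n L₁)
    (hL₂ : IsChannel m n L₂) (hrank : n * (choi m n L).rank < m + n) {t s : ℝ} (ht : 0 < t)
    (hs : 0 ≤ s) (h : L = (t : ℂ) • L₁ + (s : ℂ) • L₂) : L₁ = L := by
  obtain ⟨B, hB⟩ := exists_mul_conjTranspose_eq_of_posSemidef hL.posSemidef_choi
  have hpos₁ : ((t : ℂ) • choi m n L₁).PosSemidef := hL₁.posSemidef_choi.smul (by simpa using ht.le)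
  have hpos₂ : ((s : ℂ) • choi m n L₂).PosSemidef := hL₂.posSemidef_choi.smul (by simpa using hs)
  have hZ : choi m n L = (t : ℂ) • choi m n L₁ + (s : ℂ) • choi m n L₂ := by rw [h]; rfl
  obtain ⟨K, hK, hKB⟩ := exists_isHermitian_eq_mul_mul_conjTranspose_of_le hpos₁.nonneg
    (B := B) (by rwa [le_iff, hB, hZ, add_sub_cancel_left])
  let H := K - (t : ℂ) • 1
  have hH : H.IsHermitian := hK.sub (by simp [IsHermitian])
  have hBH : B * H * Bᴴ = (t : ℂ) • (choi m n L₁ - choi m n L) := by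
    simp [H, Matrix.mul_sub, Matrix.sub_mul, smul_sub, hKB, hB]
  have htr : traceRight ℂ (Fin m) (Fin n) (B * H * Bᴴ) = 0 := by
    rw [hBH, map_smul, map_sub, hL₁.traceRight_choi, hL.traceRight_choi, sub_self, smul_zero]
  have hH0 : H = 0 := eq_zero_of_traceRight_mul_mul_conjTranspose_eq_zero hH
    (hB.symm ▸ hL.traceRight_choi) htr (by simpa using hrank)
  have hsub : choi m n L₁ - choi m n L = 0 := by
    simpa [hH0, ht.ne'] using hBH.symm
  exact choi_injective (sub_eq_zero.1 hsub)

theorem IsChannel.isExtremeChannel (hL : IsChannel m n L)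
    (hrank : n * (choi m n L).rank < m + n) : IsExtremeChannel m n L := by
  refine ⟨hL, fun L₁ L₂ hL₁ hL₂ t ht₀ ht₁ h => ⟨?_, ?_⟩⟩
  · exact hL.eq_of_eq_smul_add_smul hL₁ hL₂ hrank ht₀ (sub_pos.2 ht₁).le h
  · exact hL.eq_of_eq_smul_add_smul hL₂ hL₁ hrank (sub_pos.2 ht₁) ht₀.le (h.trans (add_comm _ _))

end Channel

lemma mul_lt_add_of_le_ceil_div_min {m n r : ℕ} (hm : 0 < m) (hn : 0 < n)
    (h : r ≤ (m + min m n - 1) / min m n) : n * r < m + n := by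
  rw [Nat.le_div_iff_mul_le (by lia)] at h
  obtain hmn | hnm := le_total m n
  · have hr : r < 2 := by
      rw [min_eq_left hmn] at h
      exact Nat.lt_of_mul_lt_mul_right (a := m) (by lia)
    interval_cases r <;> lia
  · rw [min_eq_right hnm, mul_comm] at h
    lia

/-- for `m,n ≥ 2`, every channel of Choi rank at most `k₀ = ⌈m / min(m,n)⌉` is an
extreme point of `L_{m,n}`. -/
theorem stmt12 (m n : ℕ) (hm : 2 ≤ m) (hn : 2 ≤ n)
    (L : Matrix (Fin m) (Fin m) ℂ →ₗ[ℂ] Matrix (Fin n) (Fin n) ℂ)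
    (hL : IsChannel m n L)
    (hrank : (choi m n L).rank ≤ (m + min m n - 1) / min m n) :
    IsExtremeChannel m n L := by
  exact hL.isExtremeChannel (mul_lt_add_of_le_ceil_div_min (by lia) (by lia) hrank)
end
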